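/- arXiv:1206.1279 — 7 statements merged into one kernel-verified Lean document; each statement's English description precedes it below -/
import Mathlib

section
/- For all natural numbers n and m, the convolution of Schreier families satisfies S_n * S_m = S_{n+m}; that is, a finite set F of positive integers belongs to S_{n+m} if and only if F can be written as F = F_1 ∪ ... ∪ F_k where F_1 < ... < F_k, each F_j belongs to S_m, and the set {min F_j : j = 1,...,k} belongs to S_n. -/
/-- The Schreier families: `Schreier 0` consists of singletons of positive
integers, and `Schreier (n+1)` consists of unions `F₁ ∪ ⋯ ∪ F_k` where
`F₁ < ⋯ < F_k`, each `F_j ∈ Schreier n`, and `k ≤ min F₁`. -/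
def Schreier : ℕ → Set (Finset ℕ)
  | 0 => {F | ∃ n : ℕ, 0 < n ∧ F = {n}}
  | n + 1 => {F | ∃ (k : ℕ) (hk : 0 < k) (G : Fin k → Finset ℕ),
      (∀ i, G i ∈ Schreier n) ∧
      (∀ i j : Fin k, i < j → ∀ a ∈ G i, ∀ b ∈ G j, a < b) ∧
      (∀ b ∈ G ⟨0, hk⟩, k ≤ b) ∧
      F = Finset.univ.biUnion G}

theorem Schreier_pos (n : ℕ) : ∀ F ∈ Schreier n, F.Nonempty ∧ ∀ a ∈ F, 0 < a := by
  induction n with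
  | zero =>
    rintro F ⟨a, ha, rfl⟩
    simpa using ha
  | succ n ih =>
    rintro F ⟨k, hk, G, h1, h2, h3, rfl⟩
    constructor
    · obtain ⟨x, hx⟩ := (ih _ (h1 ⟨0, hk⟩)).1
      exact ⟨x, Finset.mem_biUnion.2 ⟨_, Finset.mem_univ _, hx⟩⟩
    · intro a ha
      obtain ⟨i, _, hi⟩ := Finset.mem_biUnion.1 ha
      exact (ih _ (h1 i)).2 a hi

/-- Convolution indexed by the set of minima. -/
def SConv (n m : ℕ) (F : Finset ℕ) : Prop :=
  ∃ M ∈ Schreier n, ∃ g : ℕ → Finset ℕ,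
    (∀ a ∈ M, g a ∈ Schreier m ∧ a ∈ g a ∧ ∀ b ∈ g a, a ≤ b) ∧
    (∀ a ∈ M, ∀ b ∈ M, a < b → ∀ x ∈ g a, ∀ y ∈ g b, x < y) ∧
    F = M.biUnion g

theorem mem_iff_SConv (n m : ℕ) : ∀ F, F ∈ Schreier (n + m) ↔ SConv n m F := by
  induction n with
  | zero =>
    intro F
    rw [Nat.zero_add]
    constructor
    · intro hF
      obtain ⟨hne, hpos⟩ := Schreier_pos m F hF
      refine ⟨{F.min' hne}, ⟨_, hpos _ (F.min'_mem hne), rfl⟩, fun _ => F, ?_, ?_, ?_⟩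
      · intro a ha
        rw [Finset.mem_singleton] at ha
        subst ha
        exact ⟨hF, F.min'_mem hne, fun b hb => F.min'_le b hb⟩
      · intro a ha b hb hab
        rw [Finset.mem_singleton] at ha hb
        omega
      · simp
    · rintro ⟨M, ⟨a, ha, rfl⟩, g, h1, h2, rfl⟩
      simpa using (h1 a (by simp)).1
  | succ n ih =>
    intro F
    rw [Nat.add_right_comm]
    constructor
    · rintro ⟨k, hk, H, h1, h2, h3, rfl⟩
      have h1' := fun i => (ih (H i)).1 (h1 i)
      choose M hM g hg1 hg2 hg3 using h1'
      have hsub : ∀ i, ∀ a ∈ M i, ∀ x ∈ g i a, x ∈ H i := by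
        intro i a ha x hx
        rw [hg3 i]
        exact Finset.mem_biUnion.2 ⟨a, ha, hx⟩
      have hMH : ∀ i, ∀ a ∈ M i, a ∈ H i := fun i a ha => hsub i a ha a (hg1 i a ha).2.1
      have huniq : ∀ i j a, a ∈ M i → a ∈ M j → i = j := by
        intro i j a hi hj
        rcases lt_trichotomy i j with h | h | h
        · exact absurd (h2 i j h a (hMH i a hi) a (hMH j a hj)) (lt_irrefl _)
        · exact h
        · exact absurd (h2 j i h a (hMH j a hj) a (hMH i a hi)) (lt_irrefl _)
      classical
      let g' : ℕ → Finset ℕ := fun a => if h : ∃ i, a ∈ M i then g h.choose a else ∅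
      have hg' : ∀ i, ∀ a ∈ M i, g' a = g i a := by
        intro i a ha
        have h : ∃ i, a ∈ M i := ⟨i, ha⟩
        have : h.choose = i := huniq _ _ a h.choose_spec ha
        simp only [g', dif_pos h, this]
      refine ⟨Finset.univ.biUnion M, ⟨k, hk, M, hM, ?_, ?_, rfl⟩, g', ?_, ?_, ?_⟩
      · intro i j hij a ha b hb
        exact h2 i j hij a (hMH i a ha) b (hMH j b hb)
      · intro b hb
        exact h3 b (hMH _ b hb)
      · intro a ha
        obtain ⟨i, _, hi⟩ := Finset.mem_biUnion.1 ha
        rw [hg' i a hi]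
        exact hg1 i a hi
      · intro a ha b hb hab x hx y hy
        obtain ⟨i, _, hi⟩ := Finset.mem_biUnion.1 ha
        obtain ⟨j, _, hj⟩ := Finset.mem_biUnion.1 hb
        rw [hg' i a hi] at hx
        rw [hg' j b hj] at hy
        rcases lt_trichotomy i j with h | h | h
        · exact h2 i j h x (hsub i a hi x hx) y (hsub j b hj y hy)
        · subst h
          exact hg2 i a hi b hj hab x hx y hy
        · exact absurd (h2 j i h b (hMH j b hj) a (hMH i a hi)) (by omega)
      · rw [Finset.biUnion_biUnion]
        refine Finset.biUnion_congr rfl fun i _ => ?_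
        rw [hg3 i]
        exact Finset.biUnion_congr rfl fun a ha => (hg' i a ha).symm
    · rintro ⟨_, ⟨k, hk, M, hM1, hM2, hM3, rfl⟩, g, h1, h2, rfl⟩
      have hin : ∀ i, ∀ a ∈ M i, a ∈ Finset.univ.biUnion M := fun i a ha =>
        Finset.mem_biUnion.2 ⟨i, Finset.mem_univ _, ha⟩
      refine ⟨k, hk, fun i => (M i).biUnion g, ?_, ?_, ?_, ?_⟩
      · intro i
        refine (ih _).2 ⟨M i, hM1 i, g, fun a ha => h1 a (hin i a ha), ?_, rfl⟩
        intro a ha b hb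
        exact h2 a (hin i a ha) b (hin i b hb)
      · intro i j hij x hx y hy
        obtain ⟨a, ha, hx⟩ := Finset.mem_biUnion.1 hx
        obtain ⟨b, hb, hy⟩ := Finset.mem_biUnion.1 hy
        exact h2 a (hin i a ha) b (hin j b hb) (hM2 i j hij a ha b hb) x hx y hy
      · intro x hx
        obtain ⟨a, ha, hx⟩ := Finset.mem_biUnion.1 hx
        exact (hM3 a ha).trans ((h1 a (hin _ a ha)).2.2 x hx)
      · rw [Finset.biUnion_biUnion]

theorem schreier_convolution (n m : ℕ) (F : Finset ℕ) :
    F ∈ Schreier (n + m) ↔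
      ∃ (k : ℕ) (_ : 0 < k) (G : Fin k → Finset ℕ) (μ : Fin k → ℕ),
        (∀ i, G i ∈ Schreier m) ∧
        (∀ i j : Fin k, i < j → ∀ a ∈ G i, ∀ b ∈ G j, a < b) ∧
        (∀ i, μ i ∈ G i ∧ ∀ b ∈ G i, μ i ≤ b) ∧
        Finset.image μ Finset.univ ∈ Schreier n ∧
        F = Finset.univ.biUnion G := by
  rw [mem_iff_SConv]
  constructor
  · rintro ⟨M, hM, g, h1, h2, rfl⟩
    have he : ∀ i, M.orderEmbOfFin rfl i ∈ M := fun i => M.orderEmbOfFin_mem rfl i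
    have him : Finset.image (M.orderEmbOfFin rfl) Finset.univ = M := by
      apply Finset.coe_injective
      simp
    refine ⟨M.card, (Schreier_pos n M hM).1.card_pos, fun i => g (M.orderEmbOfFin rfl i),
      M.orderEmbOfFin rfl, fun i => (h1 _ (he i)).1, ?_, fun i => (h1 _ (he i)).2, ?_, ?_⟩
    · intro i j hij
      exact h2 _ (he i) _ (he j) ((M.orderEmbOfFin rfl).strictMono hij)
    · rw [him]
      exact hM
    · conv_lhs => rw [← him]
      rw [Finset.image_biUnion]
  · rintro ⟨k, hk, G, μ, h1, h2, h3, h4, rfl⟩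
    have hmono : StrictMono μ := fun i j hij => h2 i j hij _ (h3 i).1 _ (h3 j).1
    have hg : ∀ i, Function.extend μ G (fun _ => ∅) (μ i) = G i := fun i =>
      hmono.injective.extend_apply _ _ _
    refine ⟨_, h4, Function.extend μ G (fun _ => ∅), ?_, ?_, ?_⟩
    · intro a ha
      obtain ⟨i, _, rfl⟩ := Finset.mem_image.1 ha
      rw [hg]
      exact ⟨h1 i, h3 i⟩
    · intro a ha b hb hab
      obtain ⟨i, _, rfl⟩ := Finset.mem_image.1 ha
      obtain ⟨j, _, rfl⟩ := Finset.mem_image.1 hb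
      rw [hg, hg]
      exact h2 i j (hmono.lt_iff_lt.1 hab)
    · rw [Finset.image_biUnion]
      exact Finset.biUnion_congr rfl fun i _ => (hg i).symm
end

section
/- For every infinite set M of positive integers, every natural number n ≥ 1, and every ε > 0, there exist a finite set F ⊆ M with F ∈ S_n and nonnegative reals (c_k)_{k∈F} with ∑_{k∈F} c_k = 1, such that for every subset G ⊆ F with G ∈ S_{n−1} one has ∑_{k∈G} c_k < ε. (In other words, the vector ∑_{k∈F} c_k e_k is an (n,ε) basic special convex combination supported in M.) -/
theorem Schreier_nonempty (n : ℕ) : ∀ F ∈ Schreier n, F.Nonempty := by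
  induction n with
  | zero =>
    rintro F ⟨a, -, rfl⟩
    exact Finset.singleton_nonempty a
  | succ n ih =>
    rintro F ⟨k, hk, G, h1, -, -, rfl⟩
    obtain ⟨a, ha⟩ := ih _ (h1 ⟨0, hk⟩)
    exact ⟨a, Finset.mem_biUnion.2 ⟨_, Finset.mem_univ _, ha⟩⟩

theorem Schreier_core (M : Set ℕ) (n : ℕ) (ε : ℝ) (hε : 0 < ε)
    (h : ∀ L : ℕ, ∃ (F : Finset ℕ) (c : ℕ → ℝ), ↑F ⊆ M ∧ (∀ a ∈ F, L < a) ∧ F ∈ Schreier n ∧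
      (∀ a, 0 ≤ c a) ∧ (∀ a, a ∉ F → c a = 0) ∧ (∑ a ∈ F, c a = 1) ∧
      ∀ G ∈ Schreier n, (∃ a ∈ G, a ≤ L) → ∑ a ∈ G, c a ≤ ε / 2) :
    ∃ (F : Finset ℕ) (c : ℕ → ℝ), ↑F ⊆ M ∧ F ∈ Schreier (n + 1) ∧
      (∀ a, 0 ≤ c a) ∧ (∀ a, a ∉ F → c a = 0) ∧ (∑ a ∈ F, c a = 1) ∧
      ∀ G ∈ Schreier n, ∑ a ∈ G, c a < ε := by
  choose F c hFM hL hS hc0 hcF hc1 hG using h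
  obtain ⟨k, hk⟩ := exists_nat_gt (2 / ε)
  have hkR : (0 : ℝ) < k := lt_trans (by positivity) hk
  have hk0 : 0 < k := by exact_mod_cast hkR
  let L : ℕ → ℕ := fun i => Nat.rec k (fun _ l => (F l).sup id) i
  have hL0 : L 0 = k := rfl
  have hLs : ∀ i, L (i + 1) = (F (L i)).sup id := fun i => rfl
  have hle : ∀ i, ∀ a ∈ F (L i), a ≤ L (i + 1) := fun i a ha => by
    rw [hLs]; exact Finset.le_sup (f := id) ha
  have hmono : Monotone L := by
    apply monotone_nat_of_le_succ
    intro i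
    obtain ⟨a, ha⟩ := Schreier_nonempty n _ (hS (L i))
    exact (hL _ a ha).le.trans (hle i a ha)
  let U : Finset ℕ := Finset.univ.biUnion (fun i : Fin k => F (L i))
  have hle1 : ∀ l (G : Finset ℕ), ∑ a ∈ G, c l a ≤ 1 := by
    intro l G
    rw [← hc1 l]
    calc ∑ a ∈ G, c l a ≤ ∑ a ∈ G ∪ F l, c l a :=
          Finset.sum_le_sum_of_subset_of_nonneg Finset.subset_union_left (fun a _ _ => hc0 l a)
      _ = ∑ a ∈ F l, c l a :=
          (Finset.sum_subset Finset.subset_union_right (fun a _ ha => hcF l a ha)).symm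
  have hsum : ∀ G : Finset ℕ, ∑ a ∈ G, (1 / (k : ℝ)) * ∑ i : Fin k, c (L i) a
      = (1 / (k : ℝ)) * ∑ i : Fin k, ∑ a ∈ G, c (L i) a := by
    intro G
    rw [← Finset.mul_sum, Finset.sum_comm]
  refine ⟨U, fun a => (1 / (k : ℝ)) * ∑ i : Fin k, c (L i) a, ?_, ?_, ?_, ?_, ?_, ?_⟩
  · intro a ha
    obtain ⟨i, -, hi⟩ := Finset.mem_biUnion.1 (Finset.mem_coe.1 ha)
    exact hFM _ hi
  · refine ⟨k, hk0, fun i => F (L i), fun i => hS _, ?_, ?_, rfl⟩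
    · intro i j hij a ha b hb
      have h1 := hle i a ha
      have hij' : (i : ℕ) + 1 ≤ (j : ℕ) := hij
      have h2 : L (i + 1) ≤ L j := hmono hij'
      have h3 := hL _ b hb
      omega
    · intro b hb
      exact (hL _ b hb).le
  · intro a
    exact mul_nonneg (by positivity) (Finset.sum_nonneg fun i _ => hc0 _ a)
  · intro a ha
    have : ∑ i : Fin k, c (L i) a = 0 := Finset.sum_eq_zero fun i _ => hcF _ a fun hi =>
      ha (Finset.mem_biUnion.2 ⟨i, Finset.mem_univ _, hi⟩)
    simp [this]
  · rw [hsum]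
    have : ∀ i : Fin k, ∑ a ∈ U, c (L i) a = 1 := fun i => by
      rw [← hc1 (L i)]
      exact (Finset.sum_subset
        (Finset.subset_biUnion_of_mem (fun i : Fin k => F (L i)) (Finset.mem_univ i))
        (fun a _ ha => hcF _ a ha)).symm
    simp [this, hkR.ne']
  · intro G hGS
    rw [hsum]
    have key : ∃ i0 : ℕ, ∀ i : ℕ, ∑ a ∈ G, c (L i) a ≤ (if i = i0 then 1 else 0) + ε / 2 := by
      by_cases hex : ∃ i, ∑ a ∈ G, c (L i) a ≠ 0
      · classical
        refine ⟨Nat.find hex, fun i => ?_⟩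
        obtain ⟨a, haG, ha⟩ := Finset.exists_ne_zero_of_sum_ne_zero (Nat.find_spec hex)
        have haF : a ∈ F (L (Nat.find hex)) := by
          by_contra hn
          exact ha (hcF _ a hn)
        have h1 := hle _ a haF
        rcases lt_trichotomy i (Nat.find hex) with hi | hi | hi
        · have := Nat.find_min hex hi
          rw [not_not] at this
          rw [this, if_neg hi.ne]
          positivity
        · rw [if_pos hi]
          have := hle1 (L i) G
          linarith
        · rw [if_neg hi.ne', zero_add]
          exact hG _ G hGS ⟨a, haG, h1.trans (hmono hi)⟩
      · push Not at hex
        refine ⟨0, fun i => ?_⟩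
        rw [hex]
        positivity
    obtain ⟨i0, hi0⟩ := key
    have hb : ∑ i : Fin k, ∑ a ∈ G, c (L i) a ≤ 1 + k * (ε / 2) := by
      rw [Fin.sum_univ_eq_sum_range (fun i => ∑ a ∈ G, c (L i) a) k]
      refine (Finset.sum_le_sum fun i _ => hi0 i).trans ?_
      rw [Finset.sum_add_distrib, Finset.sum_ite_eq']
      simp only [Finset.sum_const, Finset.card_range, nsmul_eq_mul]
      split_ifs <;> linarith
    rw [div_lt_iff₀ hε] at hk
    rw [one_div, inv_mul_lt_iff₀ hkR]
    linarith

theorem Schreier_main (n : ℕ) : ∀ (M : Set ℕ), M.Infinite → (∀ k ∈ M, 0 < k) →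
    ∀ ε : ℝ, 0 < ε → ∃ (F : Finset ℕ) (c : ℕ → ℝ), ↑F ⊆ M ∧ F ∈ Schreier (n + 1) ∧
      (∀ a, 0 ≤ c a) ∧ (∀ a, a ∉ F → c a = 0) ∧ (∑ a ∈ F, c a = 1) ∧
      ∀ G ∈ Schreier n, ∑ a ∈ G, c a < ε := by
  induction n with
  | zero =>
    intro M hM hpos ε hε
    refine Schreier_core M 0 ε hε fun L => ?_
    obtain ⟨m, hm, hLm⟩ := hM.exists_gt L
    refine ⟨{m}, fun a => if a = m then 1 else 0, by simpa using hm, by simpa using hLm,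
      ⟨m, hpos m hm, rfl⟩, fun a => by positivity, fun a ha => by simpa using ha, by simp, ?_⟩
    rintro G ⟨g, -, rfl⟩ ⟨a, ha, haL⟩
    rw [Finset.mem_singleton] at ha
    subst ha
    rw [Finset.sum_singleton, if_neg (by omega)]
    positivity
  | succ n ih =>
    intro M hM hpos ε hε
    refine Schreier_core M (n + 1) ε hε fun L => ?_
    have hinf : (M ∩ Set.Ioi L).Infinite := by
      have := hM.sdiff (Set.finite_Iic L)
      refine this.mono fun a ha => ⟨ha.1, ?_⟩
      simpa using ha.2
    obtain ⟨F, c, h1, h2, h3, h4, h5, h6⟩ := ih (M ∩ Set.Ioi L) hinf (fun k hk => hpos k hk.1)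
      (ε / 2 / (L + 1)) (by positivity)
    refine ⟨F, c, fun a ha => (h1 ha).1, fun a ha => (h1 ha).2, h2, h3, h4, h5, ?_⟩
    rintro G ⟨d, hd, H, hH, hlt, hmin, rfl⟩ ⟨a, ha, haL⟩
    have hdL : d ≤ L := by
      obtain ⟨j, -, hj⟩ := Finset.mem_biUnion.1 ha
      by_cases hj0 : j = ⟨0, hd⟩
      · subst hj0
        exact (hmin a hj).trans haL
      · obtain ⟨b, hb⟩ := Schreier_nonempty n _ (hH ⟨0, hd⟩)
        have hj' : (⟨0, hd⟩ : Fin d) < j := by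
          rw [Fin.lt_def]
          exact Nat.pos_of_ne_zero fun h => hj0 (Fin.ext h)
        have := hlt _ _ hj' b hb a hj
        have := hmin b hb
        omega
    have hdR : (d : ℝ) ≤ L + 1 := by
      have : (d : ℝ) ≤ L := by exact_mod_cast hdL
      linarith
    have hdisj : ((Finset.univ : Finset (Fin d)) : Set (Fin d)).PairwiseDisjoint H := by
      intro i _ j _ hij
      rw [Function.onFun, Finset.disjoint_left]
      intro b hbi hbj
      rcases lt_or_gt_of_ne hij with h | h
      · exact lt_irrefl _ (hlt _ _ h b hbi b hbj)
      · exact lt_irrefl _ (hlt _ _ h b hbj b hbi)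
    rw [Finset.sum_biUnion hdisj]
    calc ∑ i, ∑ b ∈ H i, c b ≤ ∑ i : Fin d, ε / 2 / (L + 1) :=
          Finset.sum_le_sum fun i _ => (h6 _ (hH i)).le
      _ = d * (ε / 2 / (L + 1)) := by simp
      _ ≤ (L + 1) * (ε / 2 / (L + 1)) := by gcongr
      _ = ε / 2 := by field_simp


/-- For every infinite set `M` of positive integers, every `n ≥ 1` and every
`ε > 0`, there is an `(n, ε)` basic special convex combination supported in
`M`: a set `F ⊆ M` with `F ∈ S_n` and nonnegative coefficients `(c_k)_{k∈F}`
summing to `1` such that `∑_{k∈G} c_k < ε` whenever `G ⊆ F` and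
`G ∈ S_{n-1}`. -/
theorem exists_basic_special_convex_combination
    (M : Set ℕ) (hM : M.Infinite) (hMpos : ∀ k ∈ M, 0 < k)
    (n : ℕ) (hn : 1 ≤ n) (ε : ℝ) (hε : 0 < ε) :
    ∃ (F : Finset ℕ) (c : ℕ → ℝ),
      ↑F ⊆ M ∧ F ∈ Schreier n ∧
      (∀ k ∈ F, 0 ≤ c k) ∧ (∑ k ∈ F, c k = 1) ∧
      ∀ G ⊆ F, G ∈ Schreier (n - 1) → ∑ k ∈ G, c k < ε := by

  obtain ⟨m, rfl⟩ : ∃ m, n = m + 1 := ⟨n - 1, by omega⟩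
  obtain ⟨F, c, h1, h2, h3, _, h5, h6⟩ := Schreier_main m M hM hMpos ε hε
  exact ⟨F, c, h1, h2, fun k _ => h3 k, h5, fun G _ hG => h6 G hG⟩
end

section
/- Let x = ∑_{k∈F} c_k e_k be an (n,ε) basic special convex combination (n ≥ 1, ε > 0) and let G ⊆ F. Then the Tsirelson norm satisfies ‖∑_{k∈G} c_k e_k‖_T ≤ (1/2^n) ∑_{k∈G} c_k + ε. -/
/-- The norming set `W_T` of Tsirelson space: the smallest set of finitely
supported functions containing `±e_k` (for `k ≥ 1`) and closed under the
`(1/2, S₁)`-operation: if `f₁ < ⋯ < f_d` have successive supports and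
`d ≤ min supp f₁`, then `(1/2)(f₁ + ⋯ + f_d)` belongs to the set. -/
inductive TsirelsonW : (ℕ → ℝ) → Prop
  | pos (k : ℕ) (hk : 0 < k) : TsirelsonW (fun i => if i = k then 1 else 0)
  | neg (k : ℕ) (hk : 0 < k) : TsirelsonW (fun i => if i = k then -1 else 0)
  | op (d : ℕ) (hd : 0 < d) (f : Fin d → ℕ → ℝ)
      (hf : ∀ j, TsirelsonW (f j))
      (hsucc : ∀ i j : Fin d, i < j →
        ∀ a ∈ Function.support (f i), ∀ b ∈ Function.support (f j), a < b)
      (hmin : ∀ b ∈ Function.support (f ⟨0, hd⟩), d ≤ b) :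
      TsirelsonW (fun i => (1 / 2) * ∑ j, f j i)

theorem tw_sum_eq {d : ℕ} {f : Fin d → ℕ → ℝ}
    (hsucc : ∀ i j : Fin d, i < j →
        ∀ a ∈ Function.support (f i), ∀ b ∈ Function.support (f j), a < b)
    (j : Fin d) (k : ℕ) (h : f j k ≠ 0) : ∑ i, f i k = f j k := by
  apply Finset.sum_eq_single j
  · intro b _ hb
    by_contra h0
    rcases lt_or_gt_of_ne hb with h1 | h1
    · exact lt_irrefl _ (hsucc b j h1 k h0 k h)
    · exact lt_irrefl _ (hsucc j b h1 k h k h0)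
  · intro hj
    exact absurd (Finset.mem_univ j) hj

theorem tw_nonempty {f : ℕ → ℝ} (hf : TsirelsonW f) : ∃ k, f k ≠ 0 := by
  induction hf with
  | pos k hk => exact ⟨k, by simp⟩
  | neg k hk => exact ⟨k, by simp⟩
  | op d hd f hf hsucc hmin ih =>
    obtain ⟨k, hk⟩ := ih ⟨0, hd⟩
    refine ⟨k, ?_⟩
    simp only [tw_sum_eq hsucc _ k hk]
    simpa using hk

theorem tw_abs_le {f : ℕ → ℝ} (hf : TsirelsonW f) : ∀ k, |f k| ≤ 1 := by
  induction hf with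
  | pos k hk => intro i; dsimp only; split_ifs <;> simp
  | neg k hk => intro i; dsimp only; split_ifs <;> simp
  | op d hd f hf hsucc hmin ih =>
    intro k
    by_cases h : ∃ j, f j k ≠ 0
    · obtain ⟨j, hj⟩ := h
      simp only [tw_sum_eq hsucc _ k hj]
      have := ih j k
      rw [abs_mul, abs_of_nonneg (by norm_num : (0 : ℝ) ≤ 1 / 2)]
      linarith
    · push Not at h
      simp [h]

theorem schreier_singleton (k : ℕ) (hk : 0 < k) (m : ℕ) : {k} ∈ Schreier m := by
  induction m with
  | zero => exact ⟨k, hk, rfl⟩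
  | succ m ih =>
    refine ⟨1, one_pos, fun _ => {k}, fun _ => ih, ?_, ?_, ?_⟩
    · intro i j hij
      omega
    · intro b hb
      simp at hb
      omega
    · ext; simp

theorem tw_schreier {f : ℕ → ℝ} (hf : TsirelsonW f) :
    ∀ (m : ℕ) (H : Finset ℕ), H.Nonempty → (∀ k ∈ H, 1 / 2 ^ (m + 1) < |f k|) →
      H ∈ Schreier m := by
  induction hf with
  | pos k hk =>
    intro m H hH h
    have : H = {k} := by
      rw [Finset.eq_singleton_iff_nonempty_unique_mem]
      refine ⟨hH, fun x hx => ?_⟩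
      by_contra hne
      have := h x hx
      have h2 : (0 : ℝ) < 1 / 2 ^ (m + 1) := by positivity
      simp only [if_neg hne, abs_zero] at this
      linarith
    rw [this]
    exact schreier_singleton k hk m
  | neg k hk =>
    intro m H hH h
    have : H = {k} := by
      rw [Finset.eq_singleton_iff_nonempty_unique_mem]
      refine ⟨hH, fun x hx => ?_⟩
      by_contra hne
      have := h x hx
      have h2 : (0 : ℝ) < 1 / 2 ^ (m + 1) := by positivity
      simp only [if_neg hne, abs_zero] at this
      linarith
    rw [this]
    exact schreier_singleton k hk m
  | op d hd f hf hsucc hmin ih =>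
    intro m H hH h
    have key : ∀ k ∈ H, ∃ j, f j k ≠ 0 := by
      intro k hk
      by_contra hne
      push Not at hne
      have h1 := h k hk
      have h2 : (0 : ℝ) < 1 / 2 ^ (m + 1) := by positivity
      simp only [hne, Finset.sum_const_zero, mul_zero, abs_zero] at h1
      linarith
    have val : ∀ k ∈ H, ∀ j, f j k ≠ 0 → 1 / 2 ^ m < |f j k| := by
      intro k hk j hj
      have h1 := h k hk
      simp only [tw_sum_eq hsucc _ k hj] at h1
      rw [abs_mul, abs_of_nonneg (by norm_num : (0 : ℝ) ≤ 1 / 2), pow_succ,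
        one_div_mul_eq_div] at h1
      have h3 : (1 : ℝ) / (2 ^ m * 2) = (1 / 2 ^ m) / 2 := by rw [div_div]
      rw [h3] at h1
      linarith
    cases m with
    | zero =>
      obtain ⟨k, hk⟩ := hH
      obtain ⟨j, hj⟩ := key k hk
      have h1 := val k hk j hj
      have h2 := tw_abs_le (hf j) k
      norm_num at h1
      linarith
    | succ m =>
      classical
      let Hs : Fin d → Finset ℕ := fun j => H.filter (fun k => f j k ≠ 0)
      let J : Finset (Fin d) := Finset.univ.filter (fun j => (Hs j).Nonempty)
      have hJ : J.Nonempty := by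
        obtain ⟨k, hk⟩ := hH
        obtain ⟨j, hj⟩ := key k hk
        exact ⟨j, by simpa [J, Hs] using ⟨k, by simpa using ⟨hk, hj⟩⟩⟩
      have hge : ∀ j k, f j k ≠ 0 → d ≤ k := by
        intro j k hj
        obtain ⟨a, ha⟩ := tw_nonempty (hf ⟨0, hd⟩)
        have hda := hmin a ha
        rcases Nat.eq_zero_or_pos j.1 with h0 | h0
        · have : j = ⟨0, hd⟩ := Fin.ext h0
          subst this
          exact hmin k hj
        · have := hsucc ⟨0, hd⟩ j (by simpa [Fin.lt_def] using h0) a ha k hj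
          omega
      have hcard : J.card ≤ d := by
        simpa using Finset.card_le_univ J
      let e := J.orderEmbOfFin rfl
      refine ⟨J.card, hJ.card_pos, fun i => Hs (e i), ?_, ?_, ?_, ?_⟩
      · intro i
        have hi : e i ∈ J := J.orderEmbOfFin_mem rfl i
        apply ih (e i) m
        · exact (Finset.mem_filter.mp hi).2
        · intro k hk
          have hk := Finset.mem_filter.mp hk
          exact val k hk.1 _ hk.2
      · intro i j hij a ha b hb
        exact hsucc (e i) (e j) (e.strictMono hij) a (Finset.mem_filter.mp ha).2 b
          (Finset.mem_filter.mp hb).2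
      · intro b hb
        exact hcard.trans (hge _ b (Finset.mem_filter.mp hb).2)
      · ext k
        simp only [Finset.mem_biUnion, Finset.mem_univ, true_and]
        constructor
        · intro hk
          obtain ⟨j, hj⟩ := key k hk
          have hkj : k ∈ Hs j := Finset.mem_filter.mpr ⟨hk, hj⟩
          have hjJ : j ∈ J := Finset.mem_filter.mpr ⟨Finset.mem_univ _, k, hkj⟩
          have : j ∈ Set.range e := by
            rw [Finset.range_orderEmbOfFin]
            exact hjJ
          obtain ⟨i, rfl⟩ := this
          exact ⟨i, hkj⟩
        · rintro ⟨i, hi⟩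
          exact (Finset.mem_filter.mp hi).1

/-- If `x = ∑_{k∈F} c_k e_k` is an `(n, ε)` basic special convex combination
and `G ⊆ F`, then the Tsirelson norm of `∑_{k∈G} c_k e_k`, i.e. the supremum
of `f(∑_{k∈G} c_k e_k)` over `f` in the norming set `W_T`, is at most
`(1/2^n) ∑_{k∈G} c_k + ε`. -/
theorem tsirelson_norm_scc_estimate
    (n : ℕ) (hn : 1 ≤ n) (ε : ℝ) (hε : 0 < ε)
    (F : Finset ℕ) (c : ℕ → ℝ)
    (hF : F ∈ Schreier n)
    (hc : ∀ k ∈ F, 0 ≤ c k) (hsum : ∑ k ∈ F, c k = 1)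
    (hscc : ∀ H ⊆ F, H ∈ Schreier (n - 1) → ∑ k ∈ H, c k < ε)
    (G : Finset ℕ) (hG : G ⊆ F) :
    ∀ f : ℕ → ℝ, TsirelsonW f →
      ∑ k ∈ G, f k * c k ≤ (1 / 2 ^ n) * ∑ k ∈ G, c k + ε := by
  intro f hf
  obtain ⟨m, rfl⟩ : ∃ m, n = m + 1 := ⟨n - 1, by omega⟩
  classical
  let H := G.filter (fun k => 1 / 2 ^ (m + 1) < |f k|)
  have hH : ∑ k ∈ H, c k ≤ ε := by
    rcases H.eq_empty_or_nonempty with h0 | h0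
    · rw [h0]
      simpa using hε.le
    · refine (hscc H ((Finset.filter_subset _ _).trans hG) ?_).le
      exact tw_schreier hf m H h0 (fun k hk => (Finset.mem_filter.mp hk).2)
  have hpt : ∑ k ∈ G, f k * c k ≤
      ∑ k ∈ G, ((1 / 2 ^ (m + 1)) * c k + if 1 / 2 ^ (m + 1) < |f k| then c k else 0) := by
    apply Finset.sum_le_sum
    intro k hk
    have hck := hc k (hG hk)
    have h1 := tw_abs_le hf k
    have h2 := le_abs_self (f k)
    have h3 : (0 : ℝ) < 1 / 2 ^ (m + 1) := by positivity
    split_ifs with h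
    · have := mul_le_mul_of_nonneg_right (h2.trans h1) hck
      have := mul_nonneg h3.le hck
      linarith
    · have := mul_le_mul_of_nonneg_right (h2.trans (not_lt.mp h)) hck
      linarith
  rw [Finset.sum_add_distrib, ← Finset.mul_sum, ← Finset.sum_filter] at hpt
  exact hpt.trans (by gcongr)
end

section
/- Let X be a real Banach space, let 1 < q < ∞ and let q′ be its conjugate exponent (1/q + 1/q′ = 1). Let (x_k)_{k≥1} be a sequence in X such that for every n ≥ 1, all positive integers n ≤ k_1 < ... < k_n, and all reals c_1,...,c_n, one has ‖∑_{i=1}^n c_i x_{k_i}‖ ≤ (∑_{i=1}^n |c_i|^q)^{1/q}. Then for every x* ∈ X* with ‖x*‖ ≤ 1 and every j ≥ 1, the set B_j = {k ≥ 1 : 1/2^{j+1} < |x*(x_k)| ≤ 1/2^j} satisfies #B_j ≤ ⌈(4·2^{j+1})^{q′}⌉. -/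
/-- Let `X` be a real Banach space, `1 < q < ∞` with conjugate exponent `q'`,
and `(x_k)_{k≥1}` a sequence in `X` such that for all `n ≤ k₁ < ⋯ < k_n` and
reals `c₁,…,c_n` one has `‖∑ cᵢ x_{kᵢ}‖ ≤ (∑ |cᵢ|^q)^{1/q}`.  Then for every
norm-one (or smaller) functional `x*` and every `j ≥ 1`, the set
`B_j = {k ≥ 1 : 1/2^{j+1} < |x*(x_k)| ≤ 1/2^j}` has at most
`⌈(4·2^{j+1})^{q'}⌉` elements. -/
theorem level_set_card_bound
    {X : Type*} [NormedAddCommGroup X] [NormedSpace ℝ X] [CompleteSpace X]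
    (q q' : ℝ) (hq : 1 < q) (hq' : 1 / q + 1 / q' = 1)
    (x : ℕ → X)
    (hx : ∀ (n : ℕ) (k : Fin n → ℕ), StrictMono k → (∀ i, n ≤ k i) →
      ∀ c : Fin n → ℝ, ‖∑ i, c i • x (k i)‖ ≤ (∑ i, |c i| ^ q) ^ (1 / q))
    (f : X →L[ℝ] ℝ) (hf : ‖f‖ ≤ 1) (j : ℕ) (hj : 1 ≤ j) :
    {k : ℕ | 1 ≤ k ∧ 1 / 2 ^ (j + 1) < |f (x k)| ∧ |f (x k)| ≤ 1 / 2 ^ j}.Finite ∧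
    {k : ℕ | 1 ≤ k ∧ 1 / 2 ^ (j + 1) < |f (x k)| ∧ |f (x k)| ≤ 1 / 2 ^ j}.ncard ≤
      ⌈(4 * 2 ^ (j + 1) : ℝ) ^ q'⌉₊ := by
  have hq0 : 0 < q := by linarith
  have hinv : 1 / q' = 1 - 1 / q := by linarith
  have h1q : 1 / q < 1 := by rw [div_lt_one hq0]; exact hq
  have h1q0 : 0 < 1 / q := by positivity
  have hq'0 : 0 < q' := by
    have : 0 < 1 / q' := by linarith
    exact one_div_pos.mp this
  have hq'1 : 1 ≤ q' := by
    have : 1 / q' ≤ 1 := by linarith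
    rwa [div_le_one hq'0] at this
  set M : ℝ := 2 ^ (j + 1) with hM
  have hM0 : 0 < M := by positivity
  have key : ∀ (m : ℕ) (T : Finset ℕ), 1 ≤ m → T.card = m → (∀ k ∈ T, m ≤ k) →
      (∀ k ∈ T, 1 / M < |f (x k)|) → (m : ℝ) ≤ M ^ q' := by
    intro m T hm hT hge hlow
    let k := T.orderEmbOfFin hT
    have hk : ∀ i, k i ∈ T := fun i => Finset.orderEmbOfFin_mem T hT i
    let c : Fin m → ℝ := fun i => if 0 ≤ f (x (k i)) then 1 else -1
    have hc : ∀ i, |c i| = 1 := by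
      intro i
      simp only [c]
      split_ifs <;> simp
    have hcf : ∀ i, c i * f (x (k i)) = |f (x (k i))| := by
      intro i
      simp only [c]
      split_ifs with h
      · rw [abs_of_nonneg h, one_mul]
      · rw [abs_of_neg (not_le.mp h)]; ring
    have h1 := hx m k k.strictMono (fun i => hge _ (hk i)) c
    simp only [hc, Real.one_rpow, Finset.sum_const, Finset.card_univ, Fintype.card_fin,
      nsmul_eq_mul, mul_one] at h1
    have h2 : f (∑ i, c i • x (k i)) = ∑ i, |f (x (k i))| := by
      rw [map_sum]
      refine Finset.sum_congr rfl fun i _ => ?_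
      rw [map_smul, smul_eq_mul, hcf]
    have h3 : (m : ℝ) * (1 / M) ≤ ∑ i, |f (x (k i))| := by
      have := Finset.card_nsmul_le_sum Finset.univ (fun i => |f (x (k i))|) (1 / M)
        (fun i _ => (hlow _ (hk i)).le)
      simpa using this
    have h4 : f (∑ i, c i • x (k i)) ≤ (m : ℝ) ^ (1 / q) := by
      calc f (∑ i, c i • x (k i)) ≤ ‖f (∑ i, c i • x (k i))‖ := le_abs_self _
        _ ≤ ‖f‖ * ‖∑ i, c i • x (k i)‖ := f.le_opNorm _
        _ ≤ 1 * ‖∑ i, c i • x (k i)‖ := by gcongr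
        _ ≤ _ := by rw [one_mul]; exact h1
    have hm0 : (0 : ℝ) < m := by exact_mod_cast hm
    have h5 : (m : ℝ) ≤ (m : ℝ) ^ (1 / q) * M := by
      have : (m : ℝ) * (1 / M) ≤ (m : ℝ) ^ (1 / q) := by rw [h2] at h4; exact h3.trans h4
      rwa [mul_one_div, div_le_iff₀ hM0] at this
    have h6 : (m : ℝ) ^ (1 / q') ≤ M := by
      rw [hinv, Real.rpow_sub hm0, Real.rpow_one, div_le_iff₀ (by positivity), mul_comm]
      exact h5
    calc (m : ℝ) = ((m : ℝ) ^ (1 / q')) ^ q' := by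
          rw [← Real.rpow_mul hm0.le, one_div_mul_cancel hq'0.ne', Real.rpow_one]
      _ ≤ M ^ q' := Real.rpow_le_rpow (by positivity) h6 hq'0.le
  set N := ⌈(4 * M) ^ q'⌉₊ with hN
  have hNge : 4 * M ^ q' ≤ N := by
    have h4 : (4 : ℝ) ≤ 4 ^ q' := by
      simpa using Real.rpow_le_rpow_of_exponent_le (by norm_num : (1 : ℝ) ≤ 4) hq'1
    have h := Nat.le_ceil ((4 * M) ^ q')
    rw [Real.mul_rpow (by norm_num) hM0.le] at h
    have hp : 0 < M ^ q' := by positivity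
    rw [hN, Real.mul_rpow (by norm_num) hM0.le]
    nlinarith
  set B := {k : ℕ | 1 ≤ k ∧ 1 / M < |f (x k)| ∧ |f (x k)| ≤ 1 / 2 ^ j} with hB
  have main : ∀ S : Finset ℕ, (S : Set ℕ) ⊆ B → S.card ≤ N := by
    intro S hS
    by_contra! hcard
    let m := N / 2 + 1
    have hsplit := Finset.card_filter_add_card_filter_not (s := S) (fun k => m ≤ k)
    have hsm : (S.filter (fun k => ¬ m ≤ k)).card ≤ m - 1 := by
      have : S.filter (fun k => ¬ m ≤ k) ⊆ Finset.Ico 1 m := by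
        intro k hk
        rw [Finset.mem_filter] at hk
        have h1 := (hS hk.1).1
        rw [Finset.mem_Ico]
        omega
      simpa using Finset.card_le_card this
    have hbig : m ≤ (S.filter (fun k => m ≤ k)).card := by omega
    obtain ⟨T, hTs, hT⟩ := Finset.exists_subset_card_eq hbig
    have h := key m T (by omega) hT (fun k hk => (Finset.mem_filter.mp (hTs hk)).2)
      (fun k hk => (hS (Finset.mem_filter.mp (hTs hk)).1).2.1)
    have h2 : (N : ℝ) + 1 ≤ 2 * m := by
      have : N + 1 ≤ 2 * m := by omega
      exact_mod_cast this
    have hp : 0 < M ^ q' := by positivity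
    linarith
  have hfin : B.Finite := by
    by_contra hinf
    obtain ⟨S, hS, hc⟩ := Set.Infinite.exists_subset_card_eq hinf (N + 1)
    have := main S hS
    omega
  refine ⟨hfin, ?_⟩
  rw [Set.ncard_eq_toFinset_card B hfin]
  exact main _ (by simp)
end

section
/- Let X be a real Banach space, 1 < q < ∞ with conjugate exponent q′, and let p > q′. Set t_j = ⌈(4·2^{j+1})^{q′}⌉ for j ≥ 1 and α = 8^{q′/p} ∑_{j=1}^∞ 2^{−(1−q′/p)j} + 1 (a finite quantity since p > q′). Let (x*_k)_{k≥1} be a sequence in X*, (x_k)_{k≥1} a sequence in X with ‖x_k‖ ≤ 1/2 for all k, and C > 0 such that for every n ≥ 1, all n ≤ k_1 < ... < k_n, and all reals c_1,...,c_n: ‖∑_{i=1}^n c_i x*_{k_i}‖ ≤ C(∑_{i=1}^n |c_i|^p)^{1/p} and ‖∑_{i=1}^n c_i x_{k_i}‖ ≤ (∑_{i=1}^n |c_i|^q)^{1/q}. Let (m_j)_{j≥1} be a strictly increasing sequence of positive integers with m_j ≥ t_j for all j. Then for every x ∈ X and every N ≥ 1, ‖∑_{k=1}^N x*_{m_k}(x)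 x_k‖ ≤ C(α + 1)‖x‖. In particular the partial sums of the series defining the map T x = ∑_{k=1}^∞ x*_{m_k}(x) x_k are uniformly bounded by C(α+1)‖x‖. -/
lemma sum_orderEmb {V : Type*} [AddCommMonoid V] (F : Finset ℕ) (g : ℕ → V) :
    ∑ i, g (F.orderEmbOfFin rfl i) = ∑ k ∈ F, g k := by
  have h : F = Finset.univ.map (F.orderEmbOfFin rfl).toEmbedding := by
    ext k
    simp only [Finset.mem_map, Finset.mem_univ, true_and]
    have := Finset.range_orderEmbOfFin F rfl
    have h2 : k ∈ Set.range (F.orderEmbOfFin rfl) ↔ k ∈ F := by rw [this]; simp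
    rw [← h2]; rfl
  conv_rhs => rw [h]
  rw [Finset.sum_map]; rfl

lemma finset_est {V : Type*} [NormedAddCommGroup V] [NormedSpace ℝ V] (D r : ℝ) (v : ℕ → V)
    (hv : ∀ (n : ℕ) (k : Fin n → ℕ), StrictMono k → (∀ i, n ≤ k i) →
      ∀ c : Fin n → ℝ, ‖∑ i, c i • v (k i)‖ ≤ D * (∑ i, |c i| ^ r) ^ (1 / r))
    (F : Finset ℕ) (μ : ℕ → ℕ) (hμ : StrictMonoOn μ F) (hF : ∀ k ∈ F, F.card ≤ μ k) (c : ℕ → ℝ) :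
    ‖∑ k ∈ F, c k • v (μ k)‖ ≤ D * (∑ k ∈ F, |c k| ^ r) ^ (1 / r) := by
  have h := hv F.card (fun i => μ (F.orderEmbOfFin rfl i))
    (fun a b hab => hμ (by simp) (by simp) (by simpa using hab))
    (fun i => hF _ (by simp)) (fun i => c (F.orderEmbOfFin rfl i))
  rwa [sum_orderEmb F (fun k => c k • v (μ k)), sum_orderEmb F (fun k => |c k| ^ r)] at h

lemma card_est {X : Type*} [NormedAddCommGroup X] [NormedSpace ℝ X]
    (q q' : ℝ) (hq : 1 < q) (hq' : 1 / q + 1 / q' = 1) (hq1 : 1 < q') (x : ℕ → X)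
    (hx : ∀ (n : ℕ) (k : Fin n → ℕ), StrictMono k → (∀ i, n ≤ k i) →
      ∀ c : Fin n → ℝ, ‖∑ i, c i • x (k i)‖ ≤ (∑ i, |c i| ^ q) ^ (1 / q))
    (f : X →L[ℝ] ℝ) (hf : ‖f‖ ≤ 1) (A : ℝ) (hA : 0 < A) (F : Finset ℕ) (h1 : ∀ k ∈ F, 1 ≤ k)
    (hF : ∀ k ∈ F, 1 ≤ A * |f (x k)|) : (F.card : ℝ) ≤ (2 * A) ^ q' := by
  set h := (F.card + 1) / 2 with hh
  have hG : h ≤ (F.filter (fun k => h ≤ k)).card := by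
    have e := Finset.card_filter_add_card_filter_not (s := F) (fun k => h ≤ k)
    have : (F.filter (fun k => ¬ h ≤ k)).card ≤ h - 1 := by
      have : F.filter (fun k => ¬ h ≤ k) ⊆ Finset.Ico 1 h := by
        intro k hk
        simp only [Finset.mem_filter, Finset.mem_Ico] at *
        exact ⟨h1 k hk.1, by omega⟩
      simpa using Finset.card_le_card this
    omega
  obtain ⟨G, hGs, hGc⟩ := Finset.exists_subset_card_eq hG
  have hGm : ∀ k ∈ G, k ∈ F ∧ h ≤ k := fun k hk => by simpa using hGs hk
  have est := finset_est 1 q x (by simpa using hx) G id (strictMono_id.strictMonoOn _)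
    (fun k hk => by rw [hGc]; exact (hGm k hk).2) (fun k => SignType.sign (f (x k)))
  have hne : ∀ k ∈ G, f (x k) ≠ 0 := by
    intro k hk h0
    have := hF k (hGm k hk).1
    rw [h0] at this; norm_num at this
  have hs : ∑ k ∈ G, |((SignType.sign (f (x k)) : SignType) : ℝ)| ^ q = h := by
    rw [← hGc, Finset.card_eq_sum_ones]; push_cast
    refine Finset.sum_congr rfl fun k hk => ?_
    rcases lt_or_gt_of_ne (hne k hk) with h | h <;> simp [h]
  rw [hs, one_mul] at est
  have lower : (h : ℝ) ≤ A * (h : ℝ) ^ (1 / q) := by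
    calc (h : ℝ) = ∑ k ∈ G, 1 := by simp [hGc]
      _ ≤ ∑ k ∈ G, A * |f (x k)| := Finset.sum_le_sum fun k hk => hF k (hGm k hk).1
      _ = A * f (∑ k ∈ G, ((SignType.sign (f (x k)) : SignType) : ℝ) • x k) := by
        rw [map_sum, Finset.mul_sum]
        refine Finset.sum_congr rfl fun k hk => ?_
        rw [map_smul, smul_eq_mul, sign_mul_self]
      _ ≤ A * (h : ℝ) ^ (1 / q) := by
        gcongr
        refine (le_abs_self _).trans ?_
        refine (f.le_opNorm _).trans ?_
        exact (mul_le_of_le_one_left (norm_nonneg _) hf).trans est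
  have hn : (F.card : ℝ) ≤ 2 * h := by exact_mod_cast (by omega : F.card ≤ 2 * h)
  have hhA : (h : ℝ) ≤ A ^ q' := by
    rcases Nat.eq_zero_or_pos h with h0 | h0
    · rw [h0]; simp; positivity
    have hp : (0 : ℝ) < h := by exact_mod_cast h0
    have e : (h : ℝ) = (h : ℝ) ^ (1 / q') * (h : ℝ) ^ (1 / q) := by
      rw [← Real.rpow_add hp, add_comm, hq', Real.rpow_one]
    have : (h : ℝ) ^ (1 / q') ≤ A := by
      rw [e] at lower
      refine le_of_mul_le_mul_right ?_ (Real.rpow_pos_of_pos hp (1 / q))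
      rwa [← e] at lower ⊢
    calc (h : ℝ) = ((h : ℝ) ^ (1 / q')) ^ q' := by
          rw [← Real.rpow_mul hp.le, one_div_mul_cancel (by positivity), Real.rpow_one]
      _ ≤ A ^ q' := by gcongr
  calc (F.card : ℝ) ≤ 2 * h := hn
    _ ≤ 2 ^ q' * A ^ q' := by
      gcongr
      exact Real.self_le_rpow_of_one_le (by norm_num) hq1.le
    _ = (2 * A) ^ q' := by rw [Real.mul_rpow (by norm_num) hA.le]

/-- Quantitative boundedness of the operator `T x = ∑_k x*_{m_k}(x) x_k`.
Here `t_j = ⌈(4·2^{j+1})^{q'}⌉` and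
`α = 8^{q'/p} ∑_{j=1}^∞ 2^{-(1-q'/p)j} + 1`; under the stated upper
`ℓ_p`-estimate on `(x*_k)` and upper `ℓ_q`-estimate on `(x_k)`, the partial
sums satisfy `‖∑_{k=1}^N x*_{m_k}(x) x_k‖ ≤ C(α+1)‖x‖`. -/
theorem partial_sums_uniformly_bounded
    {X : Type*} [NormedAddCommGroup X] [NormedSpace ℝ X] [CompleteSpace X]
    (q q' p C : ℝ) (hq : 1 < q) (hq' : 1 / q + 1 / q' = 1) (hp : q' < p)
    (hC : 0 < C)
    (xs : ℕ → X →L[ℝ] ℝ) (x : ℕ → X)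
    (hxnorm : ∀ k, ‖x k‖ ≤ 1 / 2)
    (hxs : ∀ (n : ℕ) (k : Fin n → ℕ), StrictMono k → (∀ i, n ≤ k i) →
      ∀ c : Fin n → ℝ, ‖∑ i, c i • xs (k i)‖ ≤ C * (∑ i, |c i| ^ p) ^ (1 / p))
    (hx : ∀ (n : ℕ) (k : Fin n → ℕ), StrictMono k → (∀ i, n ≤ k i) →
      ∀ c : Fin n → ℝ, ‖∑ i, c i • x (k i)‖ ≤ (∑ i, |c i| ^ q) ^ (1 / q))
    (m : ℕ → ℕ)
    (hmono : ∀ j, 1 ≤ j → m j < m (j + 1))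
    (hmt : ∀ j, 1 ≤ j → ⌈(4 * 2 ^ (j + 1) : ℝ) ^ q'⌉₊ ≤ m j) :
    ∀ (z : X) (N : ℕ), 1 ≤ N →
      ‖∑ k ∈ Finset.Icc 1 N, xs (m k) z • x k‖ ≤
        C * (((8 : ℝ) ^ (q' / p) *
            (∑' j : ℕ, (2 : ℝ) ^ (-(1 - q' / p) * ((j : ℝ) + 1))) + 1) + 1) * ‖z‖ := by
  intro z N hN
  have hq0 : 0 < q := by linarith
  have hq1 : 1 < q' := by
    have a : 1 / q < 1 := by rw [div_lt_one hq0]; exact hq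
    have a0 : 0 < 1 / q := by positivity
    have b : 0 < 1 / q' := by linarith
    have c : 0 < q' := by simpa using b
    have d : 1 / q' < 1 := by linarith
    rwa [div_lt_one c] at d
  have hp0 : 0 < p := by linarith
  have hmle : ∀ i j, 1 ≤ i → i < j → m i < m j := by
    intro i j hi hij
    induction j, hij using Nat.le_induction with
    | base => exact hmono i hi
    | succ n hn ih => exact ih.trans (hmono n (by omega))
  have hm1 : ∀ k, 1 ≤ k → 1 ≤ m k := by
    intro k hk
    refine le_trans ?_ (hmt k hk)
    rw [Nat.one_le_ceil_iff]; positivity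
  obtain ⟨f, hf, hfz⟩ := exists_dual_vector'' ℝ (∑ k ∈ Finset.Icc 1 N, xs (m k) z • x k)
  have hfz' : ‖∑ k ∈ Finset.Icc 1 N, xs (m k) z • x k‖
      = ∑ k ∈ Finset.Icc 1 N, f (x k) * xs (m k) z := by
    have : f (∑ k ∈ Finset.Icc 1 N, xs (m k) z • x k)
      = ‖∑ k ∈ Finset.Icc 1 N, xs (m k) z • x k‖ := by simpa using hfz
    rw [← this, map_sum]
    exact Finset.sum_congr rfl fun k _ => by simp [mul_comm]
  have hJ : ∀ k, ∃ j : ℕ, f (x k) ≠ 0 → 1 ≤ j ∧ (1 / 2 : ℝ) ^ (j + 1) < |f (x k)| ∧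
      |f (x k)| ≤ (1 / 2 : ℝ) ^ j := by
    intro k
    by_cases h0 : f (x k) = 0
    · exact ⟨0, fun h => absurd h0 h⟩
    have hle : |f (x k)| ≤ 1 / 2 := by
      refine (f.le_opNorm _).trans ?_
      exact (mul_le_of_le_one_left (norm_nonneg _) hf).trans (hxnorm k)
    obtain ⟨n, h1, h2⟩ := exists_nat_pow_near_of_lt_one (x := |f (x k)|) (y := (1 / 2 : ℝ))
      (abs_pos.2 h0) (by linarith) (by norm_num) (by norm_num)
    refine ⟨n, fun _ => ⟨?_, h1, h2⟩⟩
    by_contra hn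
    have : n = 0 := by omega
    subst this
    norm_num at h1; linarith
  choose J hJ using hJ
  have hA : ∀ k, 1 ≤ k → |xs (m k) z| ≤ C * ‖z‖ := by
    intro k hk
    have := hxs 1 (fun _ => m k) (fun a b hab => absurd hab (by simp [Subsingleton.elim a b]))
      (fun _ => hm1 k hk) (fun _ => 1)
    simp at this
    exact (xs (m k)).le_of_opNorm_le this z
  set S := (Finset.Icc 1 N).filter (fun k => f (x k) ≠ 0) with hS
  have hSm : ∀ k ∈ S, 1 ≤ k ∧ k ≤ N ∧ f (x k) ≠ 0 := by
    intro k hk; simpa [hS, and_assoc] using hk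
  have e1 : ∑ k ∈ Finset.Icc 1 N, f (x k) * xs (m k) z = ∑ k ∈ S, f (x k) * xs (m k) z := by
    rw [hS, Finset.sum_filter]
    refine Finset.sum_congr rfl fun k _ => ?_
    split_ifs with h
    · rfl
    · have : f (x k) = 0 := by simpa using h
      simp [this]
  rw [← Finset.sum_filter_add_sum_filter_not S (fun k => J k ≤ k)] at e1
  have bound2 : ∑ k ∈ S.filter (fun k => ¬ J k ≤ k), f (x k) * xs (m k) z ≤ C * ‖z‖ := by
    have hgeo : ∀ n : ℕ, ∑ k ∈ Finset.Icc 1 n, (1 / 2 : ℝ) ^ k = 1 - (1 / 2) ^ n := by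
      intro n
      induction n with
      | zero => simp
      | succ n ih => rw [Finset.sum_Icc_succ_top (by omega), ih]; ring
    calc _ ≤ ∑ k ∈ S.filter (fun k => ¬ J k ≤ k), (1 / 2 : ℝ) ^ k * (C * ‖z‖) := by
          refine Finset.sum_le_sum fun k hk => ?_
          rw [Finset.mem_filter] at hk
          obtain ⟨h1, h2, h3⟩ := hSm k hk.1
          refine (le_abs_self _).trans ?_
          rw [abs_mul]
          refine mul_le_mul ?_ (hA k h1) (abs_nonneg _) (by positivity)
          refine (hJ k h3).2.2.trans ?_
          exact pow_le_pow_of_le_one (by norm_num) (by norm_num) (by omega)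
      _ ≤ ∑ k ∈ Finset.Icc 1 N, (1 / 2 : ℝ) ^ k * (C * ‖z‖) := by
          refine Finset.sum_le_sum_of_subset_of_nonneg ?_ (fun _ _ _ => by positivity)
          exact (Finset.filter_subset _ _).trans (Finset.filter_subset _ _)
      _ ≤ 1 * (C * ‖z‖) := by
          rw [← Finset.sum_mul, hgeo]
          gcongr
          have : (0 : ℝ) ≤ (1 / 2) ^ N := by positivity
          linarith
      _ = _ := one_mul _
  have key : ∀ j ∈ Finset.Icc 1 N,
      ∑ k ∈ (S.filter (fun k => J k ≤ k)).filter (fun k => J k = j), f (x k) * xs (m k) z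
        ≤ C * ‖z‖ * ((8 : ℝ) ^ (q' / p) * (2 : ℝ) ^ (-(1 - q' / p) * (j : ℝ))) := by
    intro j hj
    have hj1 : 1 ≤ j := (Finset.mem_Icc.1 hj).1
    set F := (S.filter (fun k => J k ≤ k)).filter (fun k => J k = j) with hF
    have hFm : ∀ k ∈ F, k ∈ S ∧ j ≤ k ∧ J k = j := by
      intro k hk
      simp only [hF, Finset.mem_filter] at hk
      exact ⟨hk.1.1, by omega, hk.2⟩
    have hc : (F.card : ℝ) ≤ (4 * 2 ^ (j + 1) : ℝ) ^ q' := by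
      refine (card_est q q' hq hq' hq1 x hx f hf (2 ^ (j + 1)) (by positivity) F
        (fun k hk => (hSm k (hFm k hk).1).1) ?_).trans ?_
      · intro k hk
        obtain ⟨a, b, c⟩ := hFm k hk
        have := (hJ k (hSm k a).2.2).2.1
        rw [c] at this
        calc (1 : ℝ) = 2 ^ (j + 1) * (1 / 2) ^ (j + 1) := by rw [← mul_pow]; norm_num
          _ ≤ _ := by gcongr
      · gcongr; norm_num
    have hcm : F.card ≤ m j := by
      refine le_trans ?_ (hmt j hj1)
      exact_mod_cast hc.trans (Nat.le_ceil _)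
    have est := finset_est C p xs hxs F m
      (fun a ha b hb hab => hmle a b (hSm a (hFm a ha).1).1 hab)
      (fun k hk => hcm.trans (by
        rcases (hFm k hk).2.1.eq_or_lt with h | h
        · rw [h]
        · exact (hmle j k hj1 h).le)) (fun k => f (x k))
    have hsum : (∑ k ∈ F, |f (x k)| ^ p) ^ (1 / p)
        ≤ (8 : ℝ) ^ (q' / p) * (2 : ℝ) ^ (-(1 - q' / p) * (j : ℝ)) := by
      calc (∑ k ∈ F, |f (x k)| ^ p) ^ (1 / p)
          ≤ (∑ k ∈ F, ((1 / 2 : ℝ) ^ j) ^ p) ^ (1 / p) := by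
            gcongr with k hk
            obtain ⟨a, b, c⟩ := hFm k hk
            have := (hJ k (hSm k a).2.2).2.2
            rwa [c] at this
        _ ≤ ((4 * 2 ^ (j + 1) : ℝ) ^ q' * ((1 / 2 : ℝ) ^ j) ^ p) ^ (1 / p) := by
            rw [Finset.sum_const, nsmul_eq_mul]
            gcongr
        _ = _ := by
            have h8 : (4 * 2 ^ (j + 1) : ℝ) = 8 * (2 : ℝ) ^ (j : ℝ) := by
              rw [Real.rpow_natCast]; ring
            have h2 : ((1 / 2 : ℝ) ^ j) = (2 : ℝ) ^ (-(j : ℝ)) := by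
              rw [Real.rpow_neg (by norm_num), Real.rpow_natCast]; simp
            rw [h8, h2, Real.mul_rpow (by positivity) (by positivity),
              ← Real.rpow_mul (by positivity), ← Real.rpow_mul (by norm_num),
              mul_one_div_cancel hp0.ne', Real.rpow_one,
              Real.mul_rpow (by norm_num) (by positivity),
              ← Real.rpow_mul (by norm_num), mul_assoc, ← Real.rpow_add (by norm_num)]
            congr 2
            · ring
            · ring
    calc ∑ k ∈ F, f (x k) * xs (m k) z = (∑ k ∈ F, f (x k) • xs (m k)) z := by simp
      _ ≤ ‖∑ k ∈ F, f (x k) • xs (m k)‖ * ‖z‖ :=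
          (Real.le_norm_self _).trans (ContinuousLinearMap.le_opNorm _ _)
      _ ≤ (C * ((8 : ℝ) ^ (q' / p) * (2 : ℝ) ^ (-(1 - q' / p) * (j : ℝ)))) * ‖z‖ := by
          gcongr
          exact est.trans (by gcongr)
      _ = _ := by ring
  have hr : 0 < 1 - q' / p := by
    have : q' / p < 1 := by rwa [div_lt_one hp0]
    linarith
  have hsummable : Summable (fun j : ℕ => (2 : ℝ) ^ (-(1 - q' / p) * ((j : ℝ) + 1))) := by
    have hg : Summable (fun j : ℕ => ((2 : ℝ) ^ (-(1 - q' / p))) ^ j) :=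
      summable_geometric_of_lt_one (by positivity)
        (Real.rpow_lt_one_of_one_lt_of_neg (by norm_num) (by linarith))
    refine (hg.mul_left ((2 : ℝ) ^ (-(1 - q' / p)))).congr fun j => ?_
    rw [← Real.rpow_natCast, ← Real.rpow_mul (by norm_num), ← Real.rpow_add (by norm_num)]
    congr 1; ring
  have hts : ∑ j ∈ Finset.Icc 1 N, (2 : ℝ) ^ (-(1 - q' / p) * (j : ℝ))
      ≤ ∑' j : ℕ, (2 : ℝ) ^ (-(1 - q' / p) * ((j : ℝ) + 1)) := by
    refine le_trans (le_of_eq ?_)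
      (hsummable.sum_le_tsum (Finset.range N) (fun _ _ => by positivity))
    rw [Finset.range_eq_Ico, ← Finset.Ico_add_one_right_eq_Icc,
      ← Finset.sum_Ico_add' (fun j : ℕ => (2 : ℝ) ^ (-(1 - q' / p) * (j : ℝ))) 0 N 1]
    simp
  have bound1 : ∑ k ∈ S.filter (fun k => J k ≤ k), f (x k) * xs (m k) z ≤ C * ‖z‖ *
      ((8 : ℝ) ^ (q' / p) * ∑' j : ℕ, (2 : ℝ) ^ (-(1 - q' / p) * ((j : ℝ) + 1))) := by
    rw [← Finset.sum_fiberwise_of_maps_to (s := S.filter (fun k => J k ≤ k))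
      (t := Finset.Icc 1 N) (g := J)]
    · refine (Finset.sum_le_sum key).trans ?_
      rw [← Finset.mul_sum, ← Finset.mul_sum]
      gcongr
    · intro k hk
      rw [Finset.mem_filter] at hk
      obtain ⟨h1, h2, h3⟩ := hSm k hk.1
      exact Finset.mem_Icc.2 ⟨(hJ k h3).1, hk.2.trans h2⟩
  rw [hfz', e1]
  have : 0 ≤ C * ‖z‖ := by positivity
  linarith
end

section
/- Let P be a nonempty set, w : P → ℕ a weight function, L_1 and L_2 disjoint sets of positive integers, and σ an injective function from the set of all finite nonempty tuples of elements of P into L_2. Call a finite tuple (p_1,...,p_d) of elements of P special if w(p_1) ∈ L_1 and w(p_q) = σ(p_1,...,p_{q−1}) for every 1 < q ≤ d; assume moreover that along every special tuple the weights are strictly increasing, i.e. w(p_1) < w(p_2) < ... < w(p_d). Let (n_k)_{k≥1} be a strictly increasing sequence of positive integers such that for every m ≥ 1 there exists a special tuple (p_1^m,...,p_{d_m}^m) with {n_1,...,n_m} ⊆ {w(p_q^m) : 1 ≤ q ≤ d_m}. Then there exists an infinite sequence (p_q)_{q≥1} in P such that every initial segment (p_1,...,p_d) is a special tuple and {n_k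 : k ≥ 1} ⊆ {w(p_q) : q ≥ 1}. -/
/-- A list `l = [p₁, …, p_d]` is a special tuple when it is nonempty, the
weight of its first entry lies in `L₁`, and for every later position `q` the
weight of the `q`-th entry equals `σ` applied to the preceding entries. -/
def SpecialTuple {P : Type*} (w : P → ℕ) (L₁ : Set ℕ) (σ : List P → ℕ)
    (l : List P) : Prop :=
  l ≠ [] ∧ ∀ (i : ℕ) (hi : i < l.length),
    (i = 0 → w (l.get ⟨i, hi⟩) ∈ L₁) ∧
    (0 < i → w (l.get ⟨i, hi⟩) = σ (l.take i))

/-- Abstract branch-extension lemma: if every finite initial collection of the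
weights `n₁ < n₂ < ⋯` is realized inside the weights of some special tuple,
then there is a single infinite branch (all of whose initial segments are
special tuples) whose weights contain all the `n_k`. -/
theorem exists_branch_containing_weights
    {P : Type*} [Nonempty P] (w : P → ℕ) (L₁ L₂ : Set ℕ)
    (hL₁pos : ∀ i ∈ L₁, 0 < i) (hL₂pos : ∀ i ∈ L₂, 0 < i)
    (hdisj : Disjoint L₁ L₂)
    (σ : List P → ℕ)
    (hσmem : ∀ l : List P, l ≠ [] → σ l ∈ L₂)
    (hσinj : ∀ l₁ l₂ : List P, l₁ ≠ [] → l₂ ≠ [] → σ l₁ = σ l₂ → l₁ = l₂)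
    (hmono : ∀ l : List P, SpecialTuple w L₁ σ l →
      ∀ (i j : ℕ) (hi : i < l.length) (hj : j < l.length), i < j →
        w (l.get ⟨i, hi⟩) < w (l.get ⟨j, hj⟩))
    (n : ℕ → ℕ) (hn : StrictMono n) (hnpos : ∀ k, 0 < n k)
    (hex : ∀ m : ℕ, ∃ l : List P, SpecialTuple w L₁ σ l ∧
      ∀ k < m, n k ∈ l.map w) :
    ∃ p : ℕ → P,
      (∀ d : ℕ, SpecialTuple w L₁ σ (List.ofFn fun i : Fin (d + 1) => p i)) ∧
      ∀ k : ℕ, ∃ q : ℕ, w (p q) = n k := by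
  choose L hL hmem using hex
  have h1 : ∀ m k, ∃ i, k < m → ∃ h : i < (L m).length, w ((L m).get ⟨i, h⟩) = n k := by
    intro m k
    by_cases hk : k < m
    · obtain ⟨a, ha, hw⟩ := List.mem_map.1 (hmem m k hk)
      obtain ⟨i, hi, rfl⟩ := List.mem_iff_getElem.1 ha
      exact ⟨i, fun _ => ⟨hi, by simpa using hw⟩⟩
    · exact ⟨0, fun h => absurd h hk⟩
  choose idx hidx using h1
  have hlt : ∀ m k k', k < k' → k' < m → idx m k < idx m k' := by
    intro m k k' hk hk'
    obtain ⟨ha, ea⟩ := hidx m k (hk.trans hk')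
    obtain ⟨hb, eb⟩ := hidx m k' hk'
    have hnn := hn hk
    by_contra hcon
    rcases Nat.lt_or_eq_of_le (not_lt.1 hcon) with h | h
    · have := hmono _ (hL m) _ _ hb ha h
      omega
    · have e : w ((L m).get ⟨idx m k', hb⟩) = w ((L m).get ⟨idx m k, ha⟩) := by
        congr 2
        exact Fin.ext h
      omega
  have hge : ∀ m k, k < m → k ≤ idx m k := by
    intro m k
    induction k with
    | zero => intro _; exact Nat.zero_le _
    | succ k ih =>
      intro h
      have := ih (by omega)
      have := hlt m k (k+1) (by omega) h
      omega
  have hσ : ∀ m k, k + 1 < m → σ ((L m).take (idx m (k+1))) = n (k+1) ∧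
      (L m).take (idx m (k+1)) ≠ [] := by
    intro m k h
    obtain ⟨ha, ea⟩ := hidx m (k+1) h
    have hg := hge m (k+1) h
    refine ⟨?_, ?_⟩
    · rw [← ea]
      exact (((hL m).2 _ ha).2 (by omega)).symm
    · intro h0
      have := congrArg List.length h0
      simp only [List.length_take, List.length_nil] at this
      omega
  have htake : ∀ m m' k, k + 1 < m → k + 1 < m' →
      (L m).take (idx m (k+1)) = (L m').take (idx m' (k+1)) := by
    intro m m' k h h'
    exact hσinj _ _ (hσ m k h).2 (hσ m' k h').2 ((hσ m k h).1.trans (hσ m' k h').1.symm)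
  have hidxeq : ∀ m m' k, k + 1 < m → k + 1 < m' → idx m (k+1) = idx m' (k+1) := by
    intro m m' k h h'
    have := congrArg List.length (htake m m' k h h')
    obtain ⟨ha, -⟩ := hidx m (k+1) h
    obtain ⟨hb, -⟩ := hidx m' (k+1) h'
    simp only [List.length_take] at this
    omega
  have hget : ∀ m m' k q, k + 1 < m → k + 1 < m' → q < idx m (k+1) →
      (L m)[q]? = (L m')[q]? := by
    intro m m' k q h h' hq
    have := congrArg (fun l => l[q]?) (htake m m' k h h')
    have e := hidxeq m m' k h h'
    simpa [List.getElem?_take, hq, e ▸ hq] using this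
  have hp : ∀ q, ∃ a, (L (q+2))[q]? = some a := by
    intro q
    obtain ⟨ha, -⟩ := hidx (q+2) (q+1) (by omega)
    have := hge (q+2) (q+1) (by omega)
    exact ⟨_, List.getElem?_eq_getElem (by omega)⟩
  choose p hp using hp
  have key : ∀ m k q, k + 1 < m → q < idx m (k+1) → (L m)[q]? = some (p q) := by
    intro m k q h hq
    rw [← hp q, hget m (k+q+2) k q h (by omega) hq]
    refine hget (k+q+2) (q+2) q q (by omega) (by omega) ?_
    have := hge (k+q+2) (q+1) (by omega)
    omega
  refine ⟨p, fun d => ?_, fun k => ?_⟩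
  · obtain ⟨ha, -⟩ := hidx (d+2) (d+1) (by omega)
    have hg := hge (d+2) (d+1) (by omega)
    have e : (List.ofFn fun i : Fin (d + 1) => p i) = (L (d+2)).take (d+1) := by
      apply List.ext_getElem?
      intro i
      rw [List.getElem?_take]
      split_ifs with hi
      · rw [key (d+2) d i (by omega) (by omega)]
        simp [hi, -List.ofFn_succ]
      · simp [hi, -List.ofFn_succ]
    rw [e]
    refine ⟨?_, ?_⟩
    · intro h0
      have := congrArg List.length h0
      simp only [List.length_take, List.length_nil] at this
      omega
    · intro i hi
      simp only [List.length_take] at hi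
      have hh := (hL (d+2)).2 i (by omega)
      have e2 : ((L (d+2)).take (d+1)).take i = (L (d+2)).take i := by
        rw [List.take_take]; congr 1; omega
      rw [e2]
      simpa using hh
  · obtain ⟨ha, ea⟩ := hidx (k+2) k (by omega)
    have hk := key (k+2) k (idx (k+2) k) (by omega) (hlt _ _ _ (by omega) (by omega))
    refine ⟨idx (k+2) k, ?_⟩
    rw [List.getElem?_eq_getElem ha] at hk
    rw [← ea, ← Option.some.inj hk]
    rfl
end

section
/- Let X be a real Banach space, (S_n)_{n≥1} a sequence of nonzero bounded linear operators on X, and {x^n_k : n ≥ 1, k ≥ 1} a family of vectors in X with sup_k ‖x^1_k‖ < ∞, satisfying: S_n x^n_k = x^{n+1}_k for all n, k, and S_n x^l_k = 0 whenever l ≠ n. Then the series S = ∑_{n=1}^∞ (1/(2^n ‖S_n‖)) S_n converges in operator norm to a bounded operator S, and for all n, k one has S^n x^1_k = a_n x^{n+1}_k, where a_n = ∏_{j=1}^n 1/(2^j ‖S_j‖) and a_0 = 1. If moreover for every d ≥ 0, all k ≠ k′, and all reals b_0,...,b_d, b′_0,...,b′_d one has ‖∑_{n=0}^d b_n x^{n+1}_k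 − ∑_{n=0}^d b′_n x^{n+1}_{k′}‖ ≥ max_{0≤n≤d} |b_n|, then for every nonzero polynomial p(t) = ∑_{n=0}^d b_n t^n with real coefficients, the operator p(S) = ∑_{n=0}^d b_n S^n is not compact; in particular S is not polynomially compact. -/
open Filter

/-- Here `x n k` denotes the vector `x^{n+1}_k` of the paper and `S n` the
operator `S_{n+1}` (indices shifted to start at `0`).  The series
`S = ∑_n (1/(2^{n+1}‖S_n‖)) S_n` converges in operator norm, its powers
satisfy `Sⁿ x⁰_k = aₙ • xⁿ_k` with `aₙ = ∏_{j<n} 1/(2^{j+1}‖S_j‖)`, and if the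
vectors `x^n_k` satisfy the displayed separation estimate, then no nonzero
polynomial in `S` is a compact operator. -/
theorem strictly_singular_not_polynomially_compact
    {X : Type*} [NormedAddCommGroup X] [NormedSpace ℝ X] [CompleteSpace X]
    (S : ℕ → X →L[ℝ] X) (hS : ∀ n, S n ≠ 0)
    (x : ℕ → ℕ → X) (M : ℝ) (hxb : ∀ k, ‖x 0 k‖ ≤ M)
    (hSx : ∀ n k, S n (x n k) = x (n + 1) k)
    (hSzero : ∀ n l k, l ≠ n → S n (x l k) = 0) :
    ∃ Ssum : X →L[ℝ] X,
      Tendsto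
        (fun N => ∑ n ∈ Finset.range N, ((2 ^ (n + 1) * ‖S n‖)⁻¹ : ℝ) • S n)
        atTop (nhds Ssum) ∧
      (∀ n k : ℕ, (Ssum ^ n) (x 0 k) =
        (∏ j ∈ Finset.range n, ((2 ^ (j + 1) * ‖S j‖)⁻¹ : ℝ)) • x n k) ∧
      ((∀ (d : ℕ) (k k' : ℕ), k ≠ k' → ∀ b b' : ℕ → ℝ, ∀ n ≤ d,
          |b n| ≤ ‖(∑ i ∈ Finset.range (d + 1), b i • x i k) -
                    (∑ i ∈ Finset.range (d + 1), b' i • x i k')‖) →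
        ∀ (d : ℕ) (b : ℕ → ℝ), (∃ n ≤ d, b n ≠ 0) →
          ¬ IsCompactOperator
              (⇑(∑ i ∈ Finset.range (d + 1), b i • Ssum ^ i))) := by
  have hc : ∀ n, 0 < (2 ^ (n + 1) * ‖S n‖ : ℝ) := fun n =>
    mul_pos (by positivity) (norm_pos_iff.mpr (hS n))
  have hsum : Summable (fun n => ((2 ^ (n + 1) * ‖S n‖)⁻¹ : ℝ) • S n) := by
    refine Summable.of_norm_bounded (g := fun n => (1/2 : ℝ) ^ n)
      (summable_geometric_of_lt_one (by norm_num) (by norm_num)) fun n => ?_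
    have h0 : ‖S n‖ ≠ 0 := norm_ne_zero_iff.mpr (hS n)
    rw [norm_smul, Real.norm_of_nonneg (inv_nonneg.mpr (hc n).le), mul_inv, mul_assoc,
      inv_mul_cancel₀ h0, mul_one, one_div, inv_pow]
    exact inv_anti₀ (by positivity) (pow_le_pow_right₀ (by norm_num) (Nat.le_succ n))
  obtain ⟨T, hT⟩ := hsum
  have hTx : ∀ n k, T (x n k) = ((2 ^ (n + 1) * ‖S n‖)⁻¹ : ℝ) • x (n + 1) k := by
    intro n k
    have h1 := hT.mapL (ContinuousLinearMap.apply ℝ X (x n k))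
    have h2 : HasSum (fun m => (ContinuousLinearMap.apply ℝ X (x n k))
        (((2 ^ (m + 1) * ‖S m‖)⁻¹ : ℝ) • S m))
        ((ContinuousLinearMap.apply ℝ X (x n k)) (((2 ^ (n + 1) * ‖S n‖)⁻¹ : ℝ) • S n)) := by
      apply hasSum_single
      intro m hm
      simp [hSzero m n k hm.symm]
    have h3 := h1.unique h2
    simpa [hSx] using h3
  have hpow : ∀ n k : ℕ, (T ^ n) (x 0 k) =
        (∏ j ∈ Finset.range n, ((2 ^ (j + 1) * ‖S j‖)⁻¹ : ℝ)) • x n k := by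
    intro n k
    induction n with
    | zero => simp
    | succ n ih =>
      rw [pow_succ', mul_apply_eq_comp, ih, map_smul, hTx, smul_smul,
        Finset.prod_range_succ]
  refine ⟨T, hT.tendsto_sum_nat, hpow, ?_⟩
  rintro hsep d b ⟨n, hn, hbn⟩ hcomp
  have hK := IsCompactOperator.isCompact_closure_image_closedBall
    (f := ((∑ i ∈ Finset.range (d + 1), b i • T ^ i : X →L[ℝ] X) : X →ₗ[ℝ] X)) hcomp M
  set a : ℕ → ℝ := fun n => ∏ j ∈ Finset.range n, ((2 ^ (j + 1) * ‖S j‖)⁻¹ : ℝ) with ha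
  have hapos : 0 < a n := Finset.prod_pos fun j _ => inv_pos.mpr (hc j)
  have hval : ∀ k, (∑ i ∈ Finset.range (d + 1), b i • T ^ i : X →L[ℝ] X) (x 0 k) =
      ∑ i ∈ Finset.range (d + 1), (b i * a i) • x i k := by
    intro k
    simp [hpow, ha, smul_smul]
  obtain ⟨y, -, φ, hφ, hlim⟩ := hK.tendsto_subseq
    (x := fun k => (∑ i ∈ Finset.range (d + 1), b i • T ^ i : X →L[ℝ] X) (x 0 k))
    (fun k => subset_closure ⟨x 0 k, by simpa using hxb k, rfl⟩)
  have hε : 0 < |b n * a n| := abs_pos.mpr (mul_ne_zero hbn hapos.ne')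
  obtain ⟨N, hN⟩ := Metric.cauchySeq_iff.mp hlim.cauchySeq _ hε
  have h := hN N le_rfl (N + 1) (Nat.le_succ N)
  rw [dist_eq_norm] at h
  simp only [Function.comp_apply] at h
  rw [hval, hval] at h
  exact absurd (hsep d (φ N) (φ (N + 1)) (hφ (Nat.lt_succ_self N)).ne
    (fun i => b i * a i) (fun i => b i * a i) n hn) (not_le.mpr h)
end
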